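/- Let G be a group with d(G) = n ≥ 2 and let H be a subgroup of G of finite index at most n + 2. Then, except for the single case where n = 2, H is normal in G and G/H is isomorphic to C_2^2 (in which case H = [G,G]G^2), every left coset of H and every right coset of H contains a primitive element of G. -/

import Mathlib

/-- A primitive element of a group `G` of finite rank: an element belonging to some
generating set of `G` of size exactly `d(G)`. -/
def IsPrimitive (G : Type*) [Group G] [Group.FG G] (g : G) : Prop :=
  ∃ S : Finset G, g ∈ S ∧ S.card = Group.rank G ∧ Subgroup.closure (S : Set G) = ⊤

/-- The exceptional case: `n = 2`, `H` is normal in `G` and `G ⧸ H ≅ C₂²` (expressed via a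
surjective homomorphism onto `C₂²` with kernel `H`). -/
def ExceptionalCase {G : Type*} [Group G] (n : ℕ) (H : Subgroup G) : Prop :=
  n = 2 ∧ H.Normal ∧ ∃ φ : G →* Multiplicative (Fin 2 → ZMod 2),
    Function.Surjective φ ∧ φ.ker = H

/-!
Let `G = ⟨x₁, …, xₙ⟩` act on `G ⧸ H` with base point `o`. The basic move: if `w` and `v` lie in
`W = ⟨xⱼ : j ≠ i⟩`, then `w xᵢ v` may replace `xᵢ` in the generating family, so `w xᵢ^{±1} v` is
primitive.

If some primitive element fixes `o`, the family can be chosen so that `xᵢ` fixes `o` while `W o` has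
at least `n` points, or is everything. At most two points then lie outside `W o`, and a point that
no `w xᵢ^{±1} v` reaches from `o` would be fixed by all of `G`.

If no primitive element fixes `o`, then `W o` has at least `n` points and is disjoint from `xᵢ W o`,
so `2n ≤ n + 2`; hence `n = 2` and `H` has index `4`. Squares of primitive elements now act
trivially, so modulo the core of `H` the squares of `x₁`, `x₂` and `x₁x₂` vanish, which leaves a
Klein four-group.
-/

open MulAction
open scoped Pointwise

section Generating

variable {G Q ι : Type*} [Group G] [Group Q]

/-- The family `f` generates the group. -/
def IsGenerating (f : ι → G) : Prop :=
  Subgroup.closure (Set.range f) = ⊤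

/-- `x` is a member of some generating family indexed by `ι`. For `ι = Fin n` with `n = d(G)` this
is primitivity; larger index types are allowed. -/
def IsFamilyPrimitive (ι : Type*) (x : G) : Prop :=
  ∃ f : ι → G, IsGenerating f ∧ x ∈ Set.range f

lemma IsFamilyPrimitive.isPrimitive [Group.FG G] {x : G}
    (hx : IsFamilyPrimitive (Fin (Group.rank G)) x) : IsPrimitive G x := by
  classical
  obtain ⟨f, hf, i, rfl⟩ := hx
  have hclosure : Subgroup.closure (Finset.univ.image f : Set G) = ⊤ := by
    rwa [Finset.coe_image, Finset.coe_univ, Set.image_univ]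
  have hcard : (Finset.univ.image f).card ≤ Group.rank G :=
    Finset.card_image_le.trans_eq (Finset.card_fin _)
  exact ⟨Finset.univ.image f, Finset.mem_image_of_mem f (Finset.mem_univ i),
    hcard.antisymm (Group.rank_le hclosure), hclosure⟩

lemma exists_isGenerating_fin_rank (G : Type*) [Group G] [Group.FG G] :
    ∃ f : Fin (Group.rank G) → G, IsGenerating f := by
  obtain ⟨S, hcard, hclosure⟩ := Group.rank_spec G
  let e := S.equivFinOfCardEq hcard
  refine ⟨Subtype.val ∘ e.symm, ?_⟩
  rw [IsGenerating, e.symm.surjective.range_comp, Subtype.range_coe]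
  exact hclosure

lemma IsGenerating.isFamilyPrimitive {f : ι → G} (hf : IsGenerating f) (i : ι) :
    IsFamilyPrimitive ι (f i) :=
  ⟨f, hf, i, rfl⟩

lemma IsGenerating.inv {f : ι → G} (hf : IsGenerating f) : IsGenerating f⁻¹ := by
  rwa [IsGenerating, ← Set.inv_range', Subgroup.closure_inv]

lemma IsGenerating.map {f : ι → G} (hf : IsGenerating f) {φ : G →* Q}
    (hφ : Function.Surjective φ) : IsGenerating (φ ∘ f) := by
  rw [IsGenerating, Set.range_comp, ← MonoidHom.map_closure, hf,
    Subgroup.map_top_of_surjective φ hφ]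

lemma IsFamilyPrimitive.inv {x : G} (hx : IsFamilyPrimitive ι x) : IsFamilyPrimitive ι x⁻¹ := by
  obtain ⟨f, hf, i, rfl⟩ := hx
  exact hf.inv.isFamilyPrimitive i

lemma IsFamilyPrimitive.conj {x : G} (hx : IsFamilyPrimitive ι x) (g : G) :
    IsFamilyPrimitive ι (g * x * g⁻¹) := by
  obtain ⟨f, hf, i, rfl⟩ := hx
  exact (hf.map (φ := (MulAut.conj g).toMonoidHom) (MulAut.conj g).surjective).isFamilyPrimitive i

lemma IsGenerating.update_mul_mul [DecidableEq ι] {f : ι → G} (hf : IsGenerating f) {i : ι}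
    {w v : G} (hw : w ∈ Subgroup.closure (f '' {i}ᶜ)) (hv : v ∈ Subgroup.closure (f '' {i}ᶜ)) :
    IsGenerating (Function.update f i (w * f i * v)) := by
  set g := Function.update f i (w * f i * v)
  have hothers : Subgroup.closure (f '' {i}ᶜ) ≤ Subgroup.closure (Set.range g) := by
    refine Subgroup.closure_mono ?_
    rintro _ ⟨j, hj, rfl⟩
    exact ⟨j, Function.update_of_ne hj _ _⟩
  have hnew : w * f i * v ∈ Subgroup.closure (Set.range g) :=
    Subgroup.subset_closure ⟨i, Function.update_self ..⟩
  have hold : f i ∈ Subgroup.closure (Set.range g) := by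
    rwa [Subgroup.mul_mem_cancel_right _ (hothers hv),
      Subgroup.mul_mem_cancel_left _ (hothers hw)] at hnew
  rw [IsGenerating, eq_top_iff, ← hf, Subgroup.closure_le]
  rintro _ ⟨j, rfl⟩
  obtain rfl | hj := eq_or_ne j i
  · exact hold
  · exact hothers (Subgroup.subset_closure (Set.mem_image_of_mem f hj))

lemma IsGenerating.isFamilyPrimitive_mul_mul {f : ι → G} (hf : IsGenerating f) {i : ι} {w v : G}
    (hw : w ∈ Subgroup.closure (f '' {i}ᶜ)) (hv : v ∈ Subgroup.closure (f '' {i}ᶜ)) :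
    IsFamilyPrimitive ι (w * f i * v) := by
  classical
  exact ⟨_, hf.update_mul_mul hw hv, i, Function.update_self ..⟩

lemma IsGenerating.isFamilyPrimitive_mul_inv_mul {f : ι → G} (hf : IsGenerating f) {i : ι}
    {w v : G} (hw : w ∈ Subgroup.closure (f '' {i}ᶜ)) (hv : v ∈ Subgroup.closure (f '' {i}ᶜ)) :
    IsFamilyPrimitive ι (w * (f i)⁻¹ * v) := by
  simpa [mul_assoc] using (hf.isFamilyPrimitive_mul_mul (inv_mem hv) (inv_mem hw)).inv

lemma IsGenerating.isFamilyPrimitive_inv_mul {f : ι → G} (hf : IsGenerating f) {i j : ι}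
    (hij : i ≠ j) : IsFamilyPrimitive ι ((f i)⁻¹ * f j) := by
  have hi : f i ∈ Subgroup.closure (f '' {j}ᶜ) :=
    Subgroup.subset_closure (Set.mem_image_of_mem f hij)
  simpa using hf.isFamilyPrimitive_mul_mul (inv_mem hi) (one_mem _)

end Generating

section Action

variable {G ι Ω : Type*} [Group G] [MulAction G Ω] {f : ι → G} {T : Set ι} {o p : Ω}

lemma IsGenerating.eq_univ_of_forall_smul_mem [IsPretransitive G Ω] (hf : IsGenerating f)
    {S : Set Ω} (hS : S.Finite) (hne : S.Nonempty) (hmem : ∀ i, ∀ p ∈ S, f i • p ∈ S) :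
    S = Set.univ := by
  have hstab : stabilizer G S = ⊤ := by
    rw [eq_top_iff, ← hf, Subgroup.closure_le]
    rintro _ ⟨i, rfl⟩
    rw [SetLike.mem_coe, mem_stabilizer_set_iff_smul_set_subset hS]
    exact Set.smul_set_subset_iff.2 fun p hp ↦ hmem i p hp
  obtain ⟨a, ha⟩ := hne
  refine Set.eq_univ_of_forall fun b ↦ ?_
  obtain ⟨g, rfl⟩ := exists_smul_eq G a b
  have hg : g • S = S := mem_stabilizer_iff.1 (hstab ▸ Subgroup.mem_top g)
  exact hg ▸ Set.smul_mem_smul_set ha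

/-- The orbit of `o` under the subgroup generated by the members of `f` with index in `T`. -/
def suborbit (f : ι → G) (T : Set ι) (o : Ω) : Set Ω :=
  orbit (Subgroup.closure (f '' T)) o

lemma mem_suborbit : p ∈ suborbit f T o ↔ ∃ w ∈ Subgroup.closure (f '' T), w • o = p := by
  simp [suborbit, mem_orbit_iff, Subgroup.smul_def]

lemma self_mem_suborbit (f : ι → G) (T : Set ι) (o : Ω) : o ∈ suborbit f T o :=
  mem_orbit_self o

lemma smul_mem_suborbit {i : ι} (hi : i ∈ T) (hp : p ∈ suborbit f T o) :
    f i • p ∈ suborbit f T o := by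
  obtain ⟨w, hw, rfl⟩ := mem_suborbit.1 hp
  have hi' := Subgroup.subset_closure (Set.mem_image_of_mem f hi)
  exact mem_suborbit.2 ⟨f i * w, mul_mem hi' hw, mul_smul ..⟩

lemma suborbit_mono (f : ι → G) (o : Ω) : Monotone fun T ↦ suborbit f T o := by
  rintro T T' hT p hp
  obtain ⟨w, hw, rfl⟩ := mem_suborbit.1 hp
  exact mem_suborbit.2 ⟨w, Subgroup.closure_mono (Set.image_mono hT) hw, rfl⟩

lemma ncard_add_one_le_ncard_suborbit [Finite Ω] (hmove : ∀ i ∈ T, f i • o ≠ o)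
    (hinj : T.InjOn fun i ↦ f i • o) : T.ncard + 1 ≤ (suborbit f T o).ncard := by
  have ho : o ∉ (fun i ↦ f i • o) '' T := fun ⟨i, hi, h⟩ ↦ hmove i hi h
  rw [← hinj.ncard_image, ← Set.ncard_insert_of_notMem ho]
  refine Set.ncard_le_ncard (Set.insert_subset (self_mem_suborbit f T o) ?_)
  rintro _ ⟨i, hi, rfl⟩
  exact smul_mem_suborbit hi (self_mem_suborbit f T o)

end Action

section NoPrimitiveFixesPoint

variable {G ι Ω : Type*} [Group G] [MulAction G Ω] [Finite Ω] {f : ι → G} {o : Ω}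

lemma IsGenerating.card_le_ncard_suborbit_compl (hf : IsGenerating f)
    (hmove : ∀ x : G, IsFamilyPrimitive ι x → x • o ≠ o) (i : ι) :
    Nat.card ι ≤ (suborbit f {i}ᶜ o).ncard := by
  have hinj : Function.Injective fun j ↦ f j • o := by
    intro j k hjk
    by_contra hne
    refine hmove _ (hf.isFamilyPrimitive_inv_mul hne) ?_
    rw [mul_smul, inv_smul_eq_iff]
    exact hjk.symm
  have : Finite ι := Finite.of_injective _ hinj
  calc Nat.card ι = ({i}ᶜ : Set ι).ncard + 1 := by
        rw [← Set.ncard_add_ncard_compl {i}, Set.ncard_singleton, add_comm]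
    _ ≤ (suborbit f {i}ᶜ o).ncard :=
        ncard_add_one_le_ncard_suborbit (fun j _ ↦ hmove _ (hf.isFamilyPrimitive j)) hinj.injOn

lemma IsGenerating.two_mul_ncard_suborbit_compl_le (hf : IsGenerating f)
    (hmove : ∀ x : G, IsFamilyPrimitive ι x → x • o ≠ o) (i : ι) :
    2 * (suborbit f {i}ᶜ o).ncard ≤ Nat.card Ω := by
  have hdisj : Disjoint (suborbit f {i}ᶜ o) (f i • suborbit f {i}ᶜ o) := by
    rw [Set.disjoint_left]
    rintro _ hp ⟨_, hq, hwv⟩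
    obtain ⟨w, hw, rfl⟩ := mem_suborbit.1 hp
    obtain ⟨v, hv, rfl⟩ := mem_suborbit.1 hq
    refine hmove _ (hf.isFamilyPrimitive_mul_mul (inv_mem hw) hv) ?_
    rw [mul_smul, mul_smul, inv_smul_eq_iff]
    exact hwv
  calc 2 * (suborbit f {i}ᶜ o).ncard
      = (suborbit f {i}ᶜ o ∪ f i • suborbit f {i}ᶜ o).ncard := by
        rw [Set.ncard_union_eq hdisj, Set.ncard_smul_set, two_mul]
    _ ≤ Nat.card Ω := Set.ncard_le_card _

lemma IsFamilyPrimitive.sq_smul_eq [Nontrivial ι] (hcard : Nat.card Ω < 6)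
    (hmove : ∀ x : G, IsFamilyPrimitive ι x → x • o ≠ o) {x : G} (hx : IsFamilyPrimitive ι x) :
    x ^ 2 • o = o := by
  have hxo : x • o ≠ o := hmove x hx
  obtain ⟨f, hf, i, rfl⟩ := hx
  obtain ⟨j, hij⟩ := exists_ne i
  have hi : i ∈ ({j}ᶜ : Set ι) := hij.symm
  by_contra hne
  have hthree : ({f i ^ 2 • o, f i • o, o} : Set Ω).ncard = 3 := by
    refine Set.ncard_eq_three.2 ⟨_, _, _, fun h ↦ hxo ?_, hne, hxo, rfl⟩
    rwa [pow_two, mul_smul, smul_left_cancel_iff] at h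
  have hsub : ({f i ^ 2 • o, f i • o, o} : Set Ω) ⊆ suborbit f {j}ᶜ o := by
    have h₀ := self_mem_suborbit f {j}ᶜ o
    have h₁ := smul_mem_suborbit hi h₀
    have h₂ := smul_mem_suborbit hi h₁
    rw [← mul_smul, ← pow_two] at h₂
    exact Set.insert_subset h₂ (Set.pair_subset h₁ h₀)
  have hle := Set.ncard_le_ncard hsub
  have htwo := hf.two_mul_ncard_suborbit_compl_le hmove j
  omega

end NoPrimitiveFixesPoint

section PrimitiveFixesPoint

variable {G ι Ω : Type*} [Group G] [MulAction G Ω] {f : ι → G} {o : Ω}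

lemma IsFamilyPrimitive.exists_isGenerating_injOn [Finite ι] {x : G} (hx : IsFamilyPrimitive ι x)
    (hxo : x • o = o) :
    ∃ f : ι → G, IsGenerating f ∧ (∃ i, f i • o = o) ∧
      {i | f i • o ≠ o}.InjOn fun i ↦ f i • o := by
  classical
  obtain ⟨f₀, hf₀, i₀, rfl⟩ := hx
  obtain ⟨f, ⟨hf, i, hi⟩, hmin⟩ := exists_minimalFor_of_wellFoundedLT
    (fun f : ι → G ↦ IsGenerating f ∧ ∃ i, f i • o = o) (fun f ↦ {i | f i • o ≠ o})
    ⟨f₀, hf₀, i₀, hxo⟩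
  refine ⟨f, hf, ⟨i, hi⟩, fun j _ k hk hjk ↦ ?_⟩
  by_contra hne
  -- Replacing `f k` by `(f j)⁻¹ * f k`, which fixes `o`, would contradict minimality.
  set g := Function.update f k ((f j)⁻¹ * f k * 1)
  have hj' : f j ∈ Subgroup.closure (f '' {k}ᶜ) :=
    Subgroup.subset_closure (Set.mem_image_of_mem f hne)
  have hg : IsGenerating g := hf.update_mul_mul (inv_mem hj') (one_mem _)
  have hgk : g k • o = o := by
    simp only [g, Function.update_self, mul_one, mul_smul]
    rw [inv_smul_eq_iff]
    exact hjk.symm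
  have hsub : {i | g i • o ≠ o} ⊆ {i | f i • o ≠ o} := by
    intro l hl
    have hlk : l ≠ k := by
      rintro rfl
      exact hl hgk
    simpa [g, hlk] using hl
  exact hmin ⟨hg, k, hgk⟩ hsub hk hgk

lemma IsGenerating.exists_min_card_le_ncard_suborbit_compl [Finite ι] [Finite Ω]
    [IsPretransitive G Ω] (hf : IsGenerating f) (hfix : ∃ i, f i • o = o)
    (hinj : {i | f i • o ≠ o}.InjOn fun i ↦ f i • o) :
    ∃ i, f i • o = o ∧ min (Nat.card ι) (Nat.card Ω) ≤ (suborbit f {i}ᶜ o).ncard := by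
  obtain ⟨i₀, hi₀⟩ := hfix
  obtain ⟨T, hmoved, ⟨hTne, hTcard⟩, hTmax⟩ := Finite.exists_le_maximal
    (p := fun T : Set ι ↦ T ≠ Set.univ ∧ T.ncard + 1 ≤ (suborbit f T o).ncard)
    (a := {i | f i • o ≠ o})
    ⟨fun h ↦ (h ▸ Set.mem_univ i₀ : i₀ ∈ {i | f i • o ≠ o}) hi₀,
      ncard_add_one_le_ncard_suborbit (fun _ hi ↦ hi) hinj⟩
  have hfixed {i : ι} (hi : i ∉ T) : f i • o = o := not_not.1 fun h ↦ hi (hmoved h)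
  have hle {i : ι} (hi : i ∉ T) : (suborbit f T o).ncard ≤ (suborbit f {i}ᶜ o).ncard :=
    Set.ncard_le_ncard (suborbit_mono f o (Set.subset_compl_singleton_iff.2 hi))
  by_cases huniv : suborbit f T o = Set.univ
  · obtain ⟨i, hi⟩ := (Set.ne_univ_iff_exists_notMem T).1 hTne
    refine ⟨i, hfixed hi, (min_le_right _ _).trans ?_⟩
    rw [← Set.ncard_univ, ← huniv]
    exact hle hi
  obtain ⟨i, p, hp, hip⟩ : ∃ i, ∃ p ∈ suborbit f T o, f i • p ∉ suborbit f T o := by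
    by_contra! h
    exact huniv (hf.eq_univ_of_forall_smul_mem (Set.toFinite _) ⟨o, self_mem_suborbit f T o⟩ h)
  have hi : i ∉ T := fun hi ↦ hip (smul_mem_suborbit hi hp)
  have hgrow : (suborbit f T o).ncard < (suborbit f (insert i T) o).ncard := by
    have hsub : suborbit f T o ⊆ suborbit f (insert i T) o :=
      suborbit_mono f o (Set.subset_insert i T)
    exact Set.ncard_lt_ncard ((Set.ssubset_iff_of_subset hsub).2
      ⟨f i • p, smul_mem_suborbit (Set.mem_insert i T) (hsub hp), hip⟩)
  have hcard := Set.ncard_insert_of_notMem hi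
  have hinsert : insert i T = Set.univ := by
    by_contra hne
    exact hi (hTmax ⟨hne, by omega⟩ (Set.subset_insert i T) (Set.mem_insert i T))
  rw [hinsert, Set.ncard_univ] at hcard
  exact ⟨i, hfixed hi, (min_le_left _ _).trans (hcard.trans_le (hTcard.trans (hle hi)))⟩

lemma IsGenerating.subsingleton_compl_suborbit_union_smul [Finite Ω] [IsPretransitive G Ω]
    (hf : IsGenerating f) {i : ι} (hcard : Nat.card Ω ≤ (suborbit f {i}ᶜ o).ncard + 2)
    (hne : suborbit f {i}ᶜ o ≠ Set.univ) :
    (suborbit f {i}ᶜ o ∪ f i • suborbit f {i}ᶜ o)ᶜ.Subsingleton := by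
  set O := suborbit f {i}ᶜ o
  have hgrow : O.ncard < (O ∪ f i • O).ncard := by
    refine Set.ncard_lt_ncard (Set.subset_union_left.ssubset_of_ne fun h ↦ hne ?_)
    refine hf.eq_univ_of_forall_smul_mem (Set.toFinite O) ⟨o, self_mem_suborbit f {i}ᶜ o⟩ ?_
    intro j p hp
    obtain rfl | hj := eq_or_ne j i
    · exact h ▸ .inr (Set.smul_mem_smul_set hp)
    · exact smul_mem_suborbit hj hp
  have htotal := Set.ncard_add_ncard_compl (O ∪ f i • O)
  rw [← Set.ncard_le_one_iff_subsingleton]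
  omega

lemma IsGenerating.smul_mem_compl_suborbit_union_smul (hf : IsGenerating f) {i : ι}
    (hi : f i • o = o) {b : Ω} (hb : ∀ x : G, IsFamilyPrimitive ι x → x • o ≠ b) {w : G}
    (hw : w ∈ Subgroup.closure (f '' {i}ᶜ)) :
    w • b ∈ (suborbit f {i}ᶜ o ∪ f i • suborbit f {i}ᶜ o)ᶜ := by
  rintro (h | ⟨p, hp, hpb⟩)
  · obtain ⟨v, hv, hvb⟩ := mem_suborbit.1 h
    refine hb _ (hf.isFamilyPrimitive_mul_mul (mul_mem (inv_mem hw) hv) (one_mem _)) ?_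
    rw [mul_one, mul_smul, hi, mul_smul, hvb, inv_smul_smul]
  · obtain ⟨v, hv, rfl⟩ := mem_suborbit.1 hp
    refine hb _ (hf.isFamilyPrimitive_mul_mul (inv_mem hw) hv) ?_
    rw [mul_smul, mul_smul, inv_smul_eq_iff]
    exact hpb

lemma IsGenerating.generator_smul_mem_compl_suborbit_union_smul (hf : IsGenerating f) {i : ι}
    (hi : f i • o = o) {b : Ω} (hb : ∀ x : G, IsFamilyPrimitive ι x → x • o ≠ b) (j : ι) :
    f j • b ∈ (suborbit f {i}ᶜ o ∪ f i • suborbit f {i}ᶜ o)ᶜ := by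
  obtain rfl | hj := eq_or_ne j i
  · rintro (h | h)
    · obtain ⟨v, hv, hvb⟩ := mem_suborbit.1 h
      refine hb _ (hf.isFamilyPrimitive_mul_inv_mul (one_mem _) hv) ?_
      rw [one_mul, mul_smul, hvb, inv_smul_smul]
    · have hb_mem := hf.smul_mem_compl_suborbit_union_smul hi hb (one_mem _)
      rw [one_smul] at hb_mem
      exact hb_mem (.inl (Set.smul_mem_smul_set_iff.1 h))
  · exact hf.smul_mem_compl_suborbit_union_smul hi hb
      (Subgroup.subset_closure (Set.mem_image_of_mem f hj))

lemma IsGenerating.exists_isFamilyPrimitive_smul_eq [Finite Ω] [IsPretransitive G Ω]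
    (hf : IsGenerating f) {i : ι} (hi : f i • o = o)
    (hcard : Nat.card Ω ≤ (suborbit f {i}ᶜ o).ncard + 2) (b : Ω) :
    ∃ x : G, IsFamilyPrimitive ι x ∧ x • o = b := by
  by_contra! hb
  have hb_mem := hf.smul_mem_compl_suborbit_union_smul hi hb (one_mem _)
  rw [one_smul] at hb_mem
  have hbO : b ∉ suborbit f {i}ᶜ o := fun h ↦ hb_mem (.inl h)
  have hsubsingleton := hf.subsingleton_compl_suborbit_union_smul hcard
    fun h ↦ hbO (h ▸ Set.mem_univ b)
  have hfixed (j : ι) : f j • b = b :=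
    hsubsingleton (hf.generator_smul_mem_compl_suborbit_union_smul hi hb j) hb_mem
  have huniv : {b} = Set.univ := hf.eq_univ_of_forall_smul_mem (Set.finite_singleton b)
    (Set.singleton_nonempty b) (by simpa using hfixed)
  have hob : o ∈ ({b} : Set Ω) := huniv ▸ Set.mem_univ o
  exact hbO (hob ▸ self_mem_suborbit f {i}ᶜ o)

lemma IsFamilyPrimitive.exists_isFamilyPrimitive_smul_eq [Finite ι] [Finite Ω]
    [IsPretransitive G Ω] {x : G} (hx : IsFamilyPrimitive ι x) (hxo : x • o = o)
    (hcard : Nat.card Ω ≤ Nat.card ι + 2) (b : Ω) :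
    ∃ y : G, IsFamilyPrimitive ι y ∧ y • o = b := by
  obtain ⟨f, hf, hfix, hinj⟩ := hx.exists_isGenerating_injOn hxo
  obtain ⟨i, hi, hmin⟩ := hf.exists_min_card_le_ncard_suborbit_compl hfix hinj
  exact hf.exists_isFamilyPrimitive_smul_eq hi (by omega) b

end PrimitiveFixesPoint

section KleinFour

variable {G Q : Type*} [Group G] [Group Q]

lemma IsGenerating.eq_univ_of_sq_eq_one {f : Fin 2 → Q} (hf : IsGenerating f)
    (h₀ : f 0 ^ 2 = 1) (h₁ : f 1 ^ 2 = 1) (h₀₁ : (f 0 * f 1) ^ 2 = 1) :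
    ({1, f 0, f 1, f 0 * f 1} : Set Q) = Set.univ := by
  rw [pow_two] at h₀ h₁ h₀₁
  have hcomm : f 1 * f 0 = f 0 * f 1 := by
    rw [← inv_eq_of_mul_eq_one_left h₀₁, mul_inv_rev, inv_eq_of_mul_eq_one_left h₀,
      inv_eq_of_mul_eq_one_left h₁]
  have h₀' (z : Q) : f 0 * (f 0 * z) = z := by rw [← mul_assoc, h₀, one_mul]
  have hcomm' (z : Q) : f 1 * (f 0 * z) = f 0 * (f 1 * z) := by
    rw [← mul_assoc, hcomm, mul_assoc]
  refine hf.eq_univ_of_forall_smul_mem (Set.toFinite _) (Set.insert_nonempty _ _) ?_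
  rw [Fin.forall_fin_two]
  constructor <;> rintro _ (rfl | rfl | rfl | rfl) <;> simp [h₀, h₁, h₀', hcomm, hcomm']

lemma IsGenerating.sq_eq_one {f : Fin 2 → Q} (hf : IsGenerating f)
    (h₀ : f 0 ^ 2 = 1) (h₁ : f 1 ^ 2 = 1) (h₀₁ : (f 0 * f 1) ^ 2 = 1) (q : Q) : q ^ 2 = 1 := by
  have hq : q ∈ ({1, f 0, f 1, f 0 * f 1} : Set Q) :=
    hf.eq_univ_of_sq_eq_one h₀ h₁ h₀₁ ▸ Set.mem_univ q
  rcases hq with rfl | rfl | rfl | rfl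
  exacts [one_pow 2, h₀, h₁, h₀₁]

lemma IsGenerating.finite_of_sq_eq_one {f : Fin 2 → Q} (hf : IsGenerating f)
    (h₀ : f 0 ^ 2 = 1) (h₁ : f 1 ^ 2 = 1) (h₀₁ : (f 0 * f 1) ^ 2 = 1) : Finite Q :=
  Set.finite_univ_iff.1 (hf.eq_univ_of_sq_eq_one h₀ h₁ h₀₁ ▸ Set.toFinite _)

lemma IsGenerating.card_le_four_of_sq_eq_one {f : Fin 2 → Q} (hf : IsGenerating f)
    (h₀ : f 0 ^ 2 = 1) (h₁ : f 1 ^ 2 = 1) (h₀₁ : (f 0 * f 1) ^ 2 = 1) : Nat.card Q ≤ 4 := by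
  classical
  rw [← Set.ncard_univ, ← hf.eq_univ_of_sq_eq_one h₀ h₁ h₀₁]
  simpa [← Set.ncard_coe_finset] using
    Finset.card_le_four (a := 1) (b := f 0) (c := f 1) (d := f 0 * f 1)

lemma IsGenerating.sq_mem {f : Fin 2 → G} (hf : IsGenerating f) {N : Subgroup G} [N.Normal]
    (h₀ : f 0 ^ 2 ∈ N) (h₁ : f 1 ^ 2 ∈ N) (h₀₁ : (f 0 * f 1) ^ 2 ∈ N) (g : G) : g ^ 2 ∈ N := by
  rw [← QuotientGroup.eq_one_iff] at h₀ h₁ h₀₁ ⊢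
  exact (hf.map (QuotientGroup.mk'_surjective N)).sq_eq_one h₀ h₁ h₀₁ g

lemma IsGenerating.eq_of_le_of_sq_mem {f : Fin 2 → G} (hf : IsGenerating f) {N H : Subgroup G}
    [N.Normal] (hsq : ∀ g : G, g ^ 2 ∈ N) (hNH : N ≤ H) (hindex : 4 ≤ H.index) : N = H := by
  have hquot : IsGenerating (QuotientGroup.mk' N ∘ f) := hf.map (QuotientGroup.mk'_surjective N)
  have hsq_quot (g : G) : (g : G ⧸ N) ^ 2 = 1 := (QuotientGroup.eq_one_iff _).2 (hsq g)
  have hfinite : Finite (G ⧸ N) := hquot.finite_of_sq_eq_one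
    (hsq_quot (f 0)) (hsq_quot (f 1)) (hsq_quot (f 0 * f 1))
  have hcard : N.index ≤ 4 := hquot.card_le_four_of_sq_eq_one
    (hsq_quot (f 0)) (hsq_quot (f 1)) (hsq_quot (f 0 * f 1))
  have : N.FiniteIndex := Subgroup.finiteIndex_of_finite_quotient
  by_contra hne
  have hlt := Subgroup.index_strictAnti (hNH.lt_of_ne hne)
  omega

lemma isKleinFour_of_card_eq_four_of_sq_eq_one (hcard : Nat.card Q = 4)
    (hsq : ∀ q : Q, q ^ 2 = 1) : IsKleinFour Q where
  card_four := hcard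
  exponent_two := by
    have : Finite Q := Nat.finite_of_card_ne_zero (by omega)
    have : Nontrivial Q := Finite.one_lt_card_iff_nontrivial.1 (by omega)
    exact (Monoid.exponent_eq_prime_iff Nat.prime_two).2 fun q hq ↦ orderOf_eq_prime (hsq q) hq

lemma isKleinFour_multiplicative_fin_two_zmod_two :
    IsKleinFour (Multiplicative (Fin 2 → ZMod 2)) :=
  isKleinFour_of_card_eq_four_of_sq_eq_one (by simp) (by decide)

lemma exceptionalCase_two_of_sq_mem {H : Subgroup G} [hH : H.Normal] (hindex : H.index = 4)
    (hsq : ∀ g : G, g ^ 2 ∈ H) : ExceptionalCase 2 H := by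
  have hquot : IsKleinFour (G ⧸ H) := by
    refine isKleinFour_of_card_eq_four_of_sq_eq_one hindex fun q ↦ ?_
    obtain ⟨g, rfl⟩ := QuotientGroup.mk_surjective q
    exact (QuotientGroup.eq_one_iff _).2 (hsq g)
  have := isKleinFour_multiplicative_fin_two_zmod_two
  obtain ⟨e⟩ := IsKleinFour.nonempty_mulEquiv (G₁ := G ⧸ H)
    (G₂ := Multiplicative (Fin 2 → ZMod 2))
  refine ⟨rfl, hH, e.toMonoidHom.comp (QuotientGroup.mk' H),
    e.surjective.comp (QuotientGroup.mk'_surjective H), ?_⟩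
  ext g
  simp

lemma ExceptionalCase.index_eq_four {n : ℕ} {H : Subgroup G} (h : ExceptionalCase n H) :
    H.index = 4 := by
  obtain ⟨-, -, φ, hφ, rfl⟩ := h
  rw [Subgroup.index_ker, MonoidHom.range_eq_top.2 hφ, Subgroup.card_top]
  exact isKleinFour_multiplicative_fin_two_zmod_two.card_four

lemma ExceptionalCase.commutator_sup_closure_sq_le {n : ℕ} {H : Subgroup G}
    (h : ExceptionalCase n H) :
    commutator G ⊔ Subgroup.closure {x : G | ∃ g : G, x = g ^ 2} ≤ H := by
  obtain ⟨-, -, φ, -, rfl⟩ := h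
  refine sup_le (Abelianization.commutator_subset_ker φ) ((Subgroup.closure_le _).2 ?_)
  rintro _ ⟨g, rfl⟩
  rw [SetLike.mem_coe, MonoidHom.mem_ker, map_pow]
  exact Monoid.exponent_dvd_iff_forall_pow_eq_one.1
    isKleinFour_multiplicative_fin_two_zmod_two.exponent_two.dvd (φ g)

lemma IsGenerating.eq_commutator_sup_closure_sq {f : Fin 2 → G} (hf : IsGenerating f) {n : ℕ}
    {H : Subgroup G} (h : ExceptionalCase n H) :
    H = commutator G ⊔ Subgroup.closure {x : G | ∃ g : G, x = g ^ 2} := by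
  set N := commutator G ⊔ Subgroup.closure {x : G | ∃ g : G, x = g ^ 2}
  have hnormal : N.Normal := Subgroup.Normal.of_commutator_le G le_sup_left
  have hsq (g : G) : g ^ 2 ∈ N :=
    Subgroup.mem_sup_right (Subgroup.subset_closure ⟨g, rfl⟩)
  exact (hf.eq_of_le_of_sq_mem hsq h.commutator_sup_closure_sq_le h.index_eq_four.ge).symm

end KleinFour

section Cosets

variable {G ι : Type*} [Group G] {H : Subgroup G}

lemma smul_mk_one_eq_iff_mem {x : G} :
    x • ((1 : G) : G ⧸ H) = ((1 : G) : G ⧸ H) ↔ x ∈ H := by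
  rw [← mem_stabilizer_iff, stabilizer_quotient]

lemma IsFamilyPrimitive.exists_inv_mul_mem [Finite ι] {x : G} (hx : IsFamilyPrimitive ι x)
    (hxH : x ∈ H) (hfin : H.index ≠ 0) (hidx : H.index ≤ Nat.card ι + 2) (g : G) :
    ∃ y : G, g⁻¹ * y ∈ H ∧ IsFamilyPrimitive ι y := by
  have : Finite (G ⧸ H) := Nat.finite_of_card_ne_zero hfin
  obtain ⟨y, hy, hyg⟩ :=
    hx.exists_isFamilyPrimitive_smul_eq (smul_mk_one_eq_iff_mem.2 hxH) hidx (g : G ⧸ H)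
  rw [Quotient.smul_coe, smul_eq_mul, mul_one] at hyg
  exact ⟨y, QuotientGroup.eq.1 hyg.symm, hy⟩

lemma IsGenerating.two_mul_card_le_index [Nonempty ι] {f : ι → G}
    (hf : IsGenerating f) (hfin : H.index ≠ 0)
    (hH : ∀ x : G, IsFamilyPrimitive ι x → x ∉ H) : 2 * Nat.card ι ≤ H.index := by
  have : Finite (G ⧸ H) := Nat.finite_of_card_ne_zero hfin
  have hmove (x : G) (hx : IsFamilyPrimitive ι x) : x • ((1 : G) : G ⧸ H) ≠ ((1 : G) : G ⧸ H) :=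
    mt smul_mk_one_eq_iff_mem.1 (hH x hx)
  obtain ⟨i⟩ := ‹Nonempty ι›
  have hle := hf.two_mul_ncard_suborbit_compl_le hmove i
  exact (Nat.mul_le_mul_left 2 (hf.card_le_ncard_suborbit_compl hmove i)).trans hle

lemma IsFamilyPrimitive.sq_mem_normalCore [Nontrivial ι] (hfin : H.index ≠ 0) (hidx : H.index < 6)
    (hH : ∀ x : G, IsFamilyPrimitive ι x → x ∉ H) {x : G} (hx : IsFamilyPrimitive ι x) :
    x ^ 2 ∈ H.normalCore := by
  have : Finite (G ⧸ H) := Nat.finite_of_card_ne_zero hfin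
  intro g
  rw [← conj_pow, ← smul_mk_one_eq_iff_mem]
  exact (hx.conj g).sq_smul_eq hidx fun y hy ↦ mt smul_mk_one_eq_iff_mem.1 (hH y hy)

lemma IsGenerating.exceptionalCase_two {f : Fin 2 → G} (hf : IsGenerating f)
    (hidx : H.index = 4) (hH : ∀ x : G, IsFamilyPrimitive (Fin 2) x → x ∉ H) :
    ExceptionalCase 2 H := by
  have hsq_prim {x : G} (hx : IsFamilyPrimitive (Fin 2) x) : x ^ 2 ∈ H.normalCore :=
    hx.sq_mem_normalCore (by omega) (by omega) hH
  have hmul : IsFamilyPrimitive (Fin 2) (f 0 * f 1) := by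
    have h₀ : f 0 ∈ Subgroup.closure (f '' {1}ᶜ) := Subgroup.subset_closure ⟨0, by simp, rfl⟩
    simpa using hf.isFamilyPrimitive_mul_mul h₀ (one_mem _)
  have hsq : ∀ g : G, g ^ 2 ∈ H.normalCore := hf.sq_mem
    (hsq_prim (hf.isFamilyPrimitive 0)) (hsq_prim (hf.isFamilyPrimitive 1)) (hsq_prim hmul)
  have hcore : H.normalCore = H := hf.eq_of_le_of_sq_mem hsq H.normalCore_le hidx.ge
  have : H.Normal := hcore ▸ H.normalCore_normal
  exact exceptionalCase_two_of_sq_mem hidx (hcore ▸ hsq)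

end Cosets

theorem stmt_19_general {G : Type*} [Group G] {n : ℕ} (hn : 2 ≤ n) {f : Fin n → G}
    (hf : IsGenerating f) (H : Subgroup G) (hfin : H.index ≠ 0) (hidx : H.index ≤ n + 2) :
    (¬ ExceptionalCase n H →
      ∀ g : G, (∃ x : G, g⁻¹ * x ∈ H ∧ IsFamilyPrimitive (Fin n) x) ∧
        (∃ x : G, x * g⁻¹ ∈ H ∧ IsFamilyPrimitive (Fin n) x)) ∧
    (ExceptionalCase n H →
      H = commutator G ⊔ Subgroup.closure {x : G | ∃ g : G, x = g ^ 2}) := by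
  refine ⟨fun hexc ↦ ?_, fun hexc ↦ ?_⟩
  · obtain ⟨x, hx, hxH⟩ : ∃ x : G, IsFamilyPrimitive (Fin n) x ∧ x ∈ H := by
      by_contra! hH
      have : Nonempty (Fin n) := ⟨⟨0, by omega⟩⟩
      have hindex := hf.two_mul_card_le_index hfin hH
      rw [Nat.card_fin] at hindex
      obtain rfl : n = 2 := by omega
      exact hexc (hf.exceptionalCase_two (by omega) hH)
    have hleft := hx.exists_inv_mul_mem hxH hfin (by rwa [Nat.card_fin])
    refine fun g ↦ ⟨hleft g, ?_⟩
    obtain ⟨y, hy, hy_prim⟩ := hleft g⁻¹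
    exact ⟨y⁻¹, by simpa using inv_mem hy, hy_prim.inv⟩
  · obtain rfl : n = 2 := hexc.1
    exact hf.eq_commutator_sup_closure_sq hexc

/-- Let `d(G) = n ≥ 2` and let `H` be a subgroup of `G` of finite index at most `n + 2`.
Except in the single case `n = 2`, `H` normal with `G ⧸ H ≅ C₂²` (in which case
`H = [G,G]G²`), every left coset and every right coset of `H` contains a primitive element
of `G`. -/
theorem stmt_19 {G : Type*} [Group G] [Group.FG G] (n : ℕ) (hn : 2 ≤ n)
    (hrank : Group.rank G = n) (H : Subgroup G) (hfin : H.index ≠ 0)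
    (hidx : H.index ≤ n + 2) :
    (¬ ExceptionalCase n H →
      ∀ g : G, (∃ x : G, g⁻¹ * x ∈ H ∧ IsPrimitive G x) ∧
        (∃ x : G, x * g⁻¹ ∈ H ∧ IsPrimitive G x)) ∧
    (ExceptionalCase n H →
      H = commutator G ⊔ Subgroup.closure {x : G | ∃ g : G, x = g ^ 2}) := by
  subst hrank
  obtain ⟨f, hf⟩ := exists_isGenerating_fin_rank G
  refine (stmt_19_general hn hf H hfin hidx).imp_left fun h hexc g ↦ ?_
  exact (h hexc g).imp (.imp fun _ ↦ .imp_right (·.isPrimitive))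
    (.imp fun _ ↦ .imp_right (·.isPrimitive))
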